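/- arXiv:1906.08129 — 9 statements merged into one kernel-verified Lean document; each statement's English description precedes it below -/
import Mathlib

section
/- Let 𝒴 be a finite set of K ≥ 1 classes, p a probability mass function on 𝒴, and g : {1,…,K} → [0,1] any sequence. Then the maximum of the expected set-based utility U(Ŷ) = g(|Ŷ|)·∑_{c∈Ŷ} p(c) over all nonempty subsets Ŷ ⊆ 𝒴 equals max_{1 ≤ s ≤ K} g(s)·∑_{i=1}^{s} p_i, where p_1 ≥ p_2 ≥ … ≥ p_K are the values of p sorted in decreasing order. In particular, the Bayes-optimal set-valued prediction is attained by one of the K 'top-s' sets consisting of the s classes with highest probability, so only K subsets need to be evaluated. -/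
theorem topA_card (K s : ℕ) (h : s ≤ K) :
    (Finset.univ.filter (fun i : Fin K => (i : ℕ) < s)).card = s := by
  rw [Fin.card_filter_val_lt]; omega

theorem topA_le (K : ℕ) (f : Fin K → ℝ) (hf : ∀ i j : Fin K, i ≤ j → f j ≤ f i)
    (T : Finset (Fin K)) (s : ℕ) (h1 : 1 ≤ s) (h2 : s ≤ K) (hT : T.card = s) :
    ∑ i ∈ T, f i ≤ ∑ i ∈ Finset.univ.filter (fun i : Fin K => (i : ℕ) < s), f i := by
  set A := Finset.univ.filter (fun i : Fin K => (i : ℕ) < s) with hA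
  have hAc : A.card = s := topA_card K s h2
  set t := f ⟨s - 1, by omega⟩ with ht
  have e1 := Finset.sum_inter_add_sum_sdiff T A f
  have e2 := Finset.sum_inter_add_sum_sdiff A T f
  rw [Finset.inter_comm A T] at e2
  have hc : (T \ A).card = (A \ T).card := by
    rw [Finset.card_sdiff_comm]; omega
  have b1 : ∑ i ∈ T \ A, f i ≤ (T \ A).card • t := by
    apply Finset.sum_le_card_nsmul
    intro i hi
    apply hf
    simp [hA] at hi
    rw [Fin.le_def]; simp only; omega
  have b2 : (A \ T).card • t ≤ ∑ i ∈ A \ T, f i := by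
    apply Finset.card_nsmul_le_sum
    intro i hi
    apply hf
    simp [hA] at hi
    rw [Fin.le_def]; simp only; omega
  rw [hc] at b1
  linarith

/-- The maximum of the expected set-based utility
`U(Ŷ) = g(|Ŷ|) · ∑_{c∈Ŷ} p(c)` over all nonempty subsets `Ŷ ⊆ 𝒴` equals
`max_{1 ≤ s ≤ K} g(s) · ∑_{i=1}^s p_i`, where `p_1 ≥ … ≥ p_K` are the sorted
probabilities (here given via an antitone enumeration `σ : Fin K ≃ Y`). -/
theorem stmt_0 {Y : Type*} [Fintype Y] [DecidableEq Y] (K : ℕ) (hK : 1 ≤ K)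
    (hcard : Fintype.card Y = K)
    (p : Y → ℝ) (hp0 : ∀ c, 0 ≤ p c) (hp1 : ∑ c, p c = 1)
    (g : ℕ → ℝ) (hg : ∀ s, 1 ≤ s → s ≤ K → 0 ≤ g s ∧ g s ≤ 1)
    (σ : Fin K ≃ Y) (hσ : ∀ i j : Fin K, i ≤ j → p (σ j) ≤ p (σ i)) :
    ∃ M : ℝ,
      IsGreatest {x : ℝ | ∃ S : Finset Y, S.Nonempty ∧ x = g S.card * ∑ c ∈ S, p c} M ∧
      IsGreatest {x : ℝ | ∃ s : ℕ, 1 ≤ s ∧ s ≤ K ∧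
        x = g s * ∑ i ∈ Finset.univ.filter (fun i : Fin K => (i : ℕ) < s), p (σ i)} M := by
  obtain ⟨m, hm, hmax⟩ := Finset.exists_max_image (Finset.Icc 1 K)
    (fun s => g s * ∑ i ∈ Finset.univ.filter (fun i : Fin K => (i : ℕ) < s), p (σ i))
    ⟨1, by simp [hK]⟩
  rw [Finset.mem_Icc] at hm
  refine ⟨_, ⟨⟨(Finset.univ.filter (fun i : Fin K => (i : ℕ) < m)).map σ.toEmbedding, ?_, ?_⟩, ?_⟩,
    ⟨⟨m, hm.1, hm.2, rfl⟩, ?_⟩⟩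
  · rw [← Finset.card_pos, Finset.card_map, topA_card K m hm.2]; omega
  · rw [Finset.card_map, topA_card K m hm.2, Finset.sum_map]; rfl
  · rintro x ⟨S, hS, rfl⟩
    have h1 : 1 ≤ S.card := hS.card_pos
    have h2 : S.card ≤ K := hcard ▸ S.card_le_univ
    refine le_trans ?_ (hmax S.card (Finset.mem_Icc.2 ⟨h1, h2⟩))
    refine mul_le_mul_of_nonneg_left ?_ (hg _ h1 h2).1
    have := topA_le K (fun i => p (σ i)) hσ (S.map σ.symm.toEmbedding) S.card h1 h2
      (Finset.card_map _)
    rw [Finset.sum_map] at this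
    simpa using this
  · rintro x ⟨s, h1, h2, rfl⟩
    exact hmax s (Finset.mem_Icc.2 ⟨h1, h2⟩)
end

section
/- Let K ≥ 3, let g : {1,…,K} → (0,∞) be a decreasing (g(s) ≥ g(s+1)) and (1/x)-convex sequence, and let p_1 ≥ p_2 ≥ … ≥ p_K ≥ 0. Define U_s = g(s)·∑_{i=1}^{s} p_i. Then for every s ∈ {1,…,K−2}, the implication U_s > U_{s+1} ⟹ U_{s+1} > U_{s+2} holds. -/
/-- For a decreasing, positive, (1/x)-convex sequence `g` and
sorted nonnegative `p_1 ≥ … ≥ p_K`, with `U s = g s * ∑_{i=1}^s p_i`,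
`U s > U (s+1)` implies `U (s+1) > U (s+2)` for every `s ∈ {1,…,K−2}`. -/
theorem stmt_1 (K : ℕ) (hK : 3 ≤ K) (g p : ℕ → ℝ)
    (hgpos : ∀ s, 1 ≤ s → s ≤ K → 0 < g s)
    (hgdec : ∀ s, 1 ≤ s → s + 1 ≤ K → g (s + 1) ≤ g s)
    (hgconv : ∀ s, 1 ≤ s → s + 2 ≤ K →
      1 / g (s + 1) ≤ (1 / g s + 1 / g (s + 2)) / 2)
    (hpnn : ∀ i, 1 ≤ i → i ≤ K → 0 ≤ p i)
    (hpdec : ∀ i, 1 ≤ i → i + 1 ≤ K → p (i + 1) ≤ p i)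
    (U : ℕ → ℝ) (hU : ∀ s, U s = g s * ∑ i ∈ Finset.Icc 1 s, p i) :
    ∀ s, 1 ≤ s → s + 2 ≤ K → U s > U (s + 1) → U (s + 1) > U (s + 2) := by
  intro s hs hsK h
  have hS : 0 ≤ ∑ i ∈ Finset.Icc 1 s, p i := by
    apply Finset.sum_nonneg
    intro i hi
    rw [Finset.mem_Icc] at hi
    exact hpnn i hi.1 (by omega)
  have e1 : ∑ i ∈ Finset.Icc 1 (s + 1), p i = ∑ i ∈ Finset.Icc 1 s, p i + p (s + 1) :=
    Finset.sum_Icc_succ_top (by omega) _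
  have e2 : ∑ i ∈ Finset.Icc 1 (s + 2), p i
      = ∑ i ∈ Finset.Icc 1 (s + 1), p i + p (s + 2) :=
    Finset.sum_Icc_succ_top (by omega) _
  rw [hU, hU, e1] at h
  rw [hU, hU, e2, e1]
  have hq := hpnn (s + 1) (by omega) (by omega)
  have hr : p (s + 2) ≤ p (s + 1) := hpdec (s + 1) (by omega) (by omega)
  have hx := hgpos s hs (by omega)
  have hy := hgpos (s + 1) (by omega) (by omega)
  have hz := hgpos (s + 2) (by omega) (by omega)
  have hc := hgconv s hs hsK
  generalize ∑ i ∈ Finset.Icc 1 s, p i = S at *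
  generalize p (s + 1) = q at *
  generalize p (s + 2) = r at *
  generalize g s = x at *
  generalize g (s + 1) = y at *
  generalize g (s + 2) = z at *
  obtain ⟨a, rfl⟩ : ∃ a, x = 1 / a := ⟨1 / x, by simp⟩
  obtain ⟨b, rfl⟩ : ∃ a, y = 1 / a := ⟨1 / y, by simp⟩
  obtain ⟨c, rfl⟩ : ∃ a, z = 1 / a := ⟨1 / z, by simp⟩
  simp only [one_div_one_div] at hc
  rw [one_div_pos] at hx hy hz
  rw [one_div_mul_eq_div, one_div_mul_eq_div, gt_iff_lt, div_lt_div_iff₀ (by assumption) (by assumption)] at *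
  have h1 : 0 ≤ (S + q) * ((c - b) - (b - a)) := mul_nonneg (by linarith) (by linarith)
  have h2 : b * r ≤ b * q := mul_le_mul_of_nonneg_left hr hy.le
  nlinarith
end

section
/- Let K ≥ 2, let g : {1,…,K} → (0,∞) be a decreasing (g(s) ≥ g(s+1)) and (1/x)-convex sequence, and let p_1 ≥ p_2 ≥ … ≥ p_K ≥ 0 with U_s = g(s)·∑_{i=1}^{s} p_i. If U_{s₀} > U_{s₀+1} for some s₀ ∈ {1,…,K−1}, then U_t > U_{t+1} for every t with s₀ ≤ t ≤ K−1; that is, once the sequence U_1, U_2, …, U_K starts to strictly decrease it keeps strictly decreasing, so it has reached its global maximum at or before the first decrease. -/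
/-- For a decreasing, positive, (1/x)-convex sequence `g` and
sorted nonnegative `p_1 ≥ … ≥ p_K`, with `U s = g s * ∑_{i=1}^s p_i`:
once the sequence `U 1, …, U K` strictly decreases at some `s₀ ∈ {1,…,K−1}`,
it keeps strictly decreasing for all `t` with `s₀ ≤ t ≤ K−1`. -/
theorem stmt_2 (K : ℕ) (hK : 2 ≤ K) (g p : ℕ → ℝ)
    (hgpos : ∀ s, 1 ≤ s → s ≤ K → 0 < g s)
    (hgdec : ∀ s, 1 ≤ s → s + 1 ≤ K → g (s + 1) ≤ g s)
    (hgconv : ∀ s, 1 ≤ s → s + 2 ≤ K →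
      1 / g (s + 1) ≤ (1 / g s + 1 / g (s + 2)) / 2)
    (hpnn : ∀ i, 1 ≤ i → i ≤ K → 0 ≤ p i)
    (hpdec : ∀ i, 1 ≤ i → i + 1 ≤ K → p (i + 1) ≤ p i)
    (U : ℕ → ℝ) (hU : ∀ s, U s = g s * ∑ i ∈ Finset.Icc 1 s, p i)
    (s₀ : ℕ) (hs₀1 : 1 ≤ s₀) (hs₀K : s₀ + 1 ≤ K)
    (hdrop : U s₀ > U (s₀ + 1)) :
    ∀ t, s₀ ≤ t → t + 1 ≤ K → U t > U (t + 1) := by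
  have key : ∀ t, 1 ≤ t → t + 1 ≤ K → (U t > U (t + 1) ↔
      (∑ i ∈ Finset.Icc 1 t, p i) * (1 / g (t + 1) - 1 / g t) > p (t + 1) * (1 / g t)) := by
    intro t h1 h2
    have ha := hgpos t h1 (by omega)
    have hb := hgpos (t + 1) (by omega) h2
    rw [hU, hU, Finset.sum_Icc_succ_top (by omega)]
    generalize (∑ i ∈ Finset.Icc 1 t, p i) = S
    have e : S * (1 / g (t + 1) - 1 / g t) - p (t + 1) * (1 / g t)
        = (g t * S - g (t + 1) * (S + p (t + 1))) / (g t * g (t + 1)) := by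
      field_simp
      ring
    rw [gt_iff_lt, gt_iff_lt, ← sub_pos, ← sub_pos (b := p (t + 1) * (1 / g t)), e,
      div_pos_iff_of_pos_right (mul_pos ha hb)]
  intro t ht
  induction t, ht using Nat.le_induction with
  | base => intro _; exact hdrop
  | succ t ht ih =>
    intro h
    have h0 := (key t (by omega) (by omega)).1 (ih (by omega))
    rw [key (t + 1) (by omega) h, Finset.sum_Icc_succ_top (by omega)]
    have hS : 0 ≤ ∑ i ∈ Finset.Icc 1 t, p i := Finset.sum_nonneg fun i hi => by
      rw [Finset.mem_Icc] at hi
      exact hpnn i hi.1 (by omega)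
    have hq := hpnn (t + 1) (by omega) (by omega)
    have hr := hpdec (t + 1) (by omega) h
    have hc := hgconv t (by omega) h
    have hb : 0 < 1 / g (t + 1) := one_div_pos.2 (hgpos (t + 1) (by omega) (by omega))
    rw [show t + 1 + 1 = t + 2 from rfl] at *
    generalize (∑ i ∈ Finset.Icc 1 t, p i) = S at *
    generalize 1 / g (t + 1) = b at *
    generalize 1 / g (t + 2) = c at *
    generalize 1 / g t = a at *
    have h1 : (S + p (t + 1)) * (b - a) ≤ (S + p (t + 1)) * (c - b) :=
      mul_le_mul_of_nonneg_left (by linarith) (by linarith)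
    have h2 := mul_le_mul_of_nonneg_right hr hb.le
    nlinarith
end

section
/- Let 𝒴 be a finite set of K ≥ 2 classes, p a probability mass function on 𝒴, and g : {1,…,K} → (0,1] a decreasing (g(s) ≥ g(s+1)) and (1/x)-convex sequence. Let p_1 ≥ … ≥ p_K be the sorted probabilities and U_s = g(s)·∑_{i=1}^{s} p_i. Let s₀ be the smallest s ∈ {1,…,K−1} with U_s > U_{s+1}, and s₀ = K if no such s exists. Then the maximum of U(Ŷ) = g(|Ŷ|)·∑_{c∈Ŷ} p(c) over all nonempty subsets Ŷ ⊆ 𝒴 equals max_{1 ≤ s ≤ s₀} U_s; i.e., the early-stopping procedure that evaluates U_1, U_2, … and stops at the first strict decrease returns the Bayes-optimal expected utility. -/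
theorem aux_sum_le (q : ℕ → ℝ) (hq : Antitone q) (T : Finset ℕ) :
    ∑ i ∈ T, q i ≤ ∑ i ∈ Finset.range T.card, q i := by
  induction T using Finset.induction_on_max with
  | empty => simp
  | insert a s ha ih =>
    have hn : a ∉ s := fun h => lt_irrefl _ (ha a h)
    have hc : s.card ≤ a := by
      have : s ⊆ Finset.range a := fun x hx => Finset.mem_range.2 (ha x hx)
      simpa using Finset.card_le_card this
    rw [Finset.sum_insert hn, Finset.card_insert_of_notMem hn, Finset.sum_range_succ]
    have := hq hc
    linarith

theorem aux_step (P q0 q1 a0 a1 a2 : ℝ) (h0 : 0 < a0) (h1 : 0 < a1) (h2 : 0 < a2)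
    (hP : 0 ≤ P) (hq : q1 ≤ q0) (hq1 : 0 ≤ q1) (hc : a1 ≤ (a0 + a2) / 2)
    (h : (P + q0) / a1 ≤ P / a0) : (P + q0 + q1) / a2 ≤ (P + q0) / a1 := by
  rw [div_le_div_iff₀ (by assumption) (by assumption)] at h ⊢
  have e1 : 0 ≤ (P + q0) * (a0 + a2 - 2 * a1) := mul_nonneg (by linarith) (by linarith)
  have e2 : 0 ≤ (q0 - q1) * a1 := mul_nonneg (by linarith) h1.le
  nlinarith


/-- Early stopping is Bayes-optimal.  With sorted probabilities
(via an antitone enumeration `σ`), `U s = g s * (sum of the `s` largest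
probabilities)`, and `s₀` the smallest `s ∈ {1,…,K−1}` with `U s > U (s+1)`
(`s₀ = K` if none exists), the maximum of the expected utility over all
nonempty subsets equals `max_{1 ≤ s ≤ s₀} U s`. -/
theorem stmt_3 {Y : Type*} [Fintype Y] [DecidableEq Y] (K : ℕ) (hK : 2 ≤ K)
    (hcard : Fintype.card Y = K)
    (p : Y → ℝ) (hp0 : ∀ c, 0 ≤ p c) (hp1 : ∑ c, p c = 1)
    (g : ℕ → ℝ)
    (hgpos : ∀ s, 1 ≤ s → s ≤ K → 0 < g s)
    (hgle1 : ∀ s, 1 ≤ s → s ≤ K → g s ≤ 1)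
    (hgdec : ∀ s, 1 ≤ s → s + 1 ≤ K → g (s + 1) ≤ g s)
    (hgconv : ∀ s, 1 ≤ s → s + 2 ≤ K →
      1 / g (s + 1) ≤ (1 / g s + 1 / g (s + 2)) / 2)
    (σ : Fin K ≃ Y) (hσ : ∀ i j : Fin K, i ≤ j → p (σ j) ≤ p (σ i))
    (U : ℕ → ℝ)
    (hU : ∀ s, U s = g s * ∑ i ∈ Finset.univ.filter (fun i : Fin K => (i : ℕ) < s), p (σ i))
    (s₀ : ℕ)
    (hs₀ : (1 ≤ s₀ ∧ s₀ + 1 ≤ K ∧ U s₀ > U (s₀ + 1) ∧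
              ∀ t, 1 ≤ t → t < s₀ → ¬ U t > U (t + 1)) ∨
           (s₀ = K ∧ ∀ t, 1 ≤ t → t + 1 ≤ K → ¬ U t > U (t + 1))) :
    ∃ M : ℝ,
      IsGreatest {x : ℝ | ∃ S : Finset Y, S.Nonempty ∧ x = g S.card * ∑ c ∈ S, p c} M ∧
      IsGreatest {x : ℝ | ∃ s : ℕ, 1 ≤ s ∧ s ≤ s₀ ∧ x = U s} M := by
  have hYK : ∀ S : Finset Y, S.card ≤ K := fun S => hcard ▸ Finset.card_le_univ S
  obtain ⟨q, hqdef⟩ : ∃ q : ℕ → ℝ, q = fun i => if h : i < K then p (σ ⟨i, h⟩) else 0 := ⟨_, rfl⟩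
  have hqv : ∀ i : Fin K, q i = p (σ i) := by intro i; simp [hqdef]
  have hq0 : ∀ i, 0 ≤ q i := by
    intro i
    rw [hqdef]
    dsimp only
    split_ifs
    · exact hp0 _
    · exact le_rfl
  have hqa : Antitone q := by
    intro i j hij
    by_cases hj : j < K
    · have hi : i < K := lt_of_le_of_lt hij hj
      rw [hqv ⟨j, hj⟩, hqv ⟨i, hi⟩]
      exact hσ _ _ hij
    · have : q j = 0 := by simp [hqdef, hj]
      rw [this]; exact hq0 i
  have hU' : ∀ s, s ≤ K → U s = g s * ∑ i ∈ Finset.range s, q i := by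
    intro s hs
    rw [hU, Finset.sum_filter]
    congr 1
    have : ∀ i : Fin K, (if (i : ℕ) < s then p (σ i) else 0) =
        (fun n : ℕ => if n < s then q n else 0) i := by intro i; simp only [hqv]
    rw [Finset.sum_congr rfl (fun i _ => this i),
      Fin.sum_univ_eq_sum_range (fun n : ℕ => if n < s then q n else 0), ← Finset.sum_filter]
    congr 1
    ext x
    simp only [Finset.mem_filter, Finset.mem_range]
    omega
  have hstep : ∀ s, 1 ≤ s → s + 2 ≤ K → U (s + 1) ≤ U s → U (s + 2) ≤ U (s + 1) := by
    intro s h1 h2 h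
    have g0 := hgpos s h1 (by omega)
    have g1 := hgpos (s+1) (by omega) (by omega)
    have g2 := hgpos (s+2) (by omega) (by omega)
    have key := aux_step (∑ i ∈ Finset.range s, q i) (q s) (q (s+1)) (1 / g s) (1 / g (s+1))
      (1 / g (s+2)) (by positivity) (by positivity) (by positivity)
      (Finset.sum_nonneg fun i _ => hq0 i) (hqa (Nat.le_succ s)) (hq0 _) (hgconv s h1 h2)
    rw [← Finset.sum_range_succ, ← Finset.sum_range_succ] at key
    simp only [div_div_eq_mul_div, div_one] at key
    rw [hU' s (by omega), hU' (s+1) (by omega)] at h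
    rw [hU' (s+2) (by omega), hU' (s+1) (by omega), mul_comm, mul_comm (g (s+1))]
    exact key (by rw [mul_comm, mul_comm _ (g s)]; exact h)
  have h1s : 1 ≤ s₀ := by
    rcases hs₀ with h | h
    · exact h.1
    · omega
  have hsK : s₀ ≤ K := by
    rcases hs₀ with h | h <;> omega
  have hup : ∀ t, 1 ≤ t → t < s₀ → U t ≤ U (t + 1) := by
    intro t ht hts
    rcases hs₀ with h | h
    · exact not_lt.1 (h.2.2.2 t ht hts)
    · exact not_lt.1 (h.2 t ht (by omega))
  have hdown : ∀ d, s₀ + d + 1 ≤ K → U (s₀ + d + 1) ≤ U (s₀ + d) := by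
    intro d
    induction d with
    | zero =>
      intro hd
      rcases hs₀ with h | h
      · exact h.2.2.1.le
      · omega
    | succ d ih =>
      intro hd
      exact hstep (s₀ + d) (by omega) (by omega) (ih (by omega))
  have hle1 : ∀ d, ∀ t, 1 ≤ t → t + d = s₀ → U t ≤ U s₀ := by
    intro d
    induction d with
    | zero => intro t _ h; rw [← h]; exact le_rfl
    | succ d ih =>
      intro t ht h
      exact (hup t ht (by omega)).trans (ih (t + 1) (by omega) (by omega))
  have hle2 : ∀ d, s₀ + d ≤ K → U (s₀ + d) ≤ U s₀ := by
    intro d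
    induction d with
    | zero => intro _; exact le_rfl
    | succ d ih => intro h; exact (hdown d h).trans (ih (by omega))
  have hle : ∀ t, 1 ≤ t → t ≤ K → U t ≤ U s₀ := by
    intro t h1 h2
    rcases le_total t s₀ with h | h
    · exact hle1 (s₀ - t) t h1 (by omega)
    · have := hle2 (t - s₀) (by omega)
      rwa [Nat.add_sub_cancel' h] at this
  have hinj : Function.Injective (fun c : Y => ((σ.symm c : Fin K) : ℕ)) :=
    Fin.val_injective.comp σ.symm.injective
  refine ⟨U s₀, ⟨?_, ?_⟩, ⟨s₀, h1s, le_rfl, rfl⟩, ?_⟩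
  · have hc : (((Finset.univ.filter (fun i : Fin K => (i : ℕ) < s₀)).map
        σ.toEmbedding)).card = s₀ := by
      rw [Finset.card_map, Fin.card_filter_val_lt]
      omega
    refine ⟨(Finset.univ.filter (fun i : Fin K => (i : ℕ) < s₀)).map σ.toEmbedding, ?_, ?_⟩
    · rw [← Finset.card_pos, hc]; omega
    · rw [hc, hU, Finset.sum_map]; rfl
  · rintro x ⟨S, hS, rfl⟩
    have hc1 : 1 ≤ S.card := Finset.card_pos.2 hS
    refine le_trans ?_ (hle S.card hc1 (hYK S))
    rw [hU' _ (hYK S)]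
    refine mul_le_mul_of_nonneg_left ?_ (hgpos _ hc1 (hYK S)).le
    have := aux_sum_le q hqa (S.image (fun c : Y => ((σ.symm c : Fin K) : ℕ)))
    rw [Finset.card_image_of_injective _ hinj, Finset.sum_image (fun a _ b _ h => hinj h)] at this
    simpa only [hqv, Equiv.apply_symm_apply] using this
  · rintro x ⟨s, h1, h2, rfl⟩
    exact hle s h1 (h2.trans hsK)
end

section
/- Let 𝒴 be a finite set of K ≥ 2 classes, p a probability mass function on 𝒴, and g : {1,…,K} → ℝ a sequence with g(1) = 1. If g(s) < 1/s for every s ∈ {2,…,K}, then every subset Ŷ ⊆ 𝒴 with |Ŷ| ≥ 2 satisfies U(Ŷ) < max_{c∈𝒴} p(c); consequently, every maximizer of the expected utility U over nonempty subsets of 𝒴 is a singleton {c} with p(c) = max_{c'∈𝒴} p(c'). -/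
/-- If `g 1 = 1` and `g s < 1/s` for every `s ∈ {2,…,K}`, then
every subset of cardinality ≥ 2 has expected utility strictly below the
maximal probability; consequently every maximizer of the expected utility
over nonempty subsets is a singleton `{c}` with `p c` maximal. -/
theorem stmt_8 {Y : Type*} [Fintype Y] [DecidableEq Y] (K : ℕ) (hK : 2 ≤ K)
    (hcard : Fintype.card Y = K)
    (p : Y → ℝ) (hp0 : ∀ c, 0 ≤ p c) (hp1 : ∑ c, p c = 1)
    (g : ℕ → ℝ) (hg1 : g 1 = 1)
    (hgs : ∀ s : ℕ, 2 ≤ s → s ≤ K → g s < 1 / (s : ℝ)) :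
    ∃ cstar : Y, (∀ c, p c ≤ p cstar) ∧
      (∀ S : Finset Y, 2 ≤ S.card → g S.card * ∑ c ∈ S, p c < p cstar) ∧
      (∀ S : Finset Y, S.Nonempty →
        (∀ T : Finset Y, T.Nonempty →
          g T.card * ∑ c ∈ T, p c ≤ g S.card * ∑ c ∈ S, p c) →
        ∃ c : Y, S = {c} ∧ ∀ c', p c' ≤ p c) := by
  have hne : Nonempty Y := Fintype.card_pos_iff.mp (by omega)
  obtain ⟨m, hm⟩ := Finite.exists_max p
  have hmpos : 0 < p m := by
    by_contra h
    have h0 : ∑ c, p c ≤ 0 := Finset.sum_nonpos fun c _ => (hm c).trans (not_lt.mp h)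
    linarith
  have key : ∀ S : Finset Y, 2 ≤ S.card → g S.card * ∑ c ∈ S, p c < p m := by
    intro S hS
    have hle : S.card ≤ K := hcard ▸ S.card_le_univ
    have hg := hgs _ hS hle
    have hs : (0 : ℝ) < S.card := by exact_mod_cast (by omega : 0 < S.card)
    have hP : ∑ c ∈ S, p c ≤ S.card * p m := by
      simpa using Finset.sum_le_card_nsmul S p (p m) fun c _ => hm c
    rcases (Finset.sum_nonneg fun c (_ : c ∈ S) => hp0 c).eq_or_lt with h | h
    · rw [← h]; simpa using hmpos
    · calc g S.card * ∑ c ∈ S, p c < 1 / (S.card : ℝ) * ∑ c ∈ S, p c :=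
            mul_lt_mul_of_pos_right hg h
        _ ≤ 1 / (S.card : ℝ) * (S.card * p m) :=
            mul_le_mul_of_nonneg_left hP (by positivity)
        _ = p m := by field_simp
  refine ⟨m, hm, key, fun S hS hmax => ?_⟩
  have h1 := hmax {m} (Finset.singleton_nonempty m)
  simp only [Finset.card_singleton, hg1, Finset.sum_singleton, one_mul] at h1
  have hc : S.card = 1 := by
    have := hS.card_pos
    by_contra hne
    exact absurd (key S (by omega)) (not_lt.mpr h1)
  obtain ⟨c, rfl⟩ := Finset.card_eq_one.mp hc
  simp only [Finset.card_singleton, hg1, Finset.sum_singleton, one_mul] at h1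
  exact ⟨c, rfl, fun c' => (hm c').trans h1⟩
end

section
/- Let 𝒴 be a finite set, let P and P̂ be probability mass functions on 𝒴, and let u : 𝒴 × (2^𝒴 ∖ {∅}) → [0,1] be any set-based utility function. Suppose Ŷ* maximizes Ŷ ↦ ∑_{c∈𝒴} u(c,Ŷ)·P(c) over nonempty subsets of 𝒴, and Ŷ maximizes Ŷ' ↦ ∑_{c∈𝒴} u(c,Ŷ')·P̂(c) over nonempty subsets of 𝒴. Then the regret of Ŷ is bounded by twice the L1-estimation error: ∑_{c∈𝒴} u(c,Ŷ*)·P(c) − ∑_{c∈𝒴} u(c,Ŷ)·P(c) ≤ 2·∑_{c∈𝒴} |P(c) − P̂(c)|. -/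
/-- Regret bound.  If `Ŷ*` maximizes the expected utility under
the true distribution `P` and `Ŷ` maximizes it under the estimate `P̂`,
then the regret of `Ŷ` under `P` is at most twice the L1-estimation error. -/
theorem stmt_10 {Y : Type*} [Fintype Y] [DecidableEq Y]
    (P Phat : Y → ℝ)
    (hP0 : ∀ c, 0 ≤ P c) (hP1 : ∑ c, P c = 1)
    (hPhat0 : ∀ c, 0 ≤ Phat c) (hPhat1 : ∑ c, Phat c = 1)
    (u : Y → Finset Y → ℝ)
    (hu : ∀ (c : Y) (S : Finset Y), S.Nonempty → 0 ≤ u c S ∧ u c S ≤ 1)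
    (Ystar Yhat : Finset Y) (hYstar : Ystar.Nonempty) (hYhat : Yhat.Nonempty)
    (hmaxP : ∀ S : Finset Y, S.Nonempty →
      ∑ c, u c S * P c ≤ ∑ c, u c Ystar * P c)
    (hmaxPhat : ∀ S : Finset Y, S.Nonempty →
      ∑ c, u c S * Phat c ≤ ∑ c, u c Yhat * Phat c) :
    (∑ c, u c Ystar * P c) - (∑ c, u c Yhat * P c) ≤
      2 * ∑ c, |P c - Phat c| := by
  have key : ∀ S : Finset Y, S.Nonempty →
      |∑ c, u c S * P c - ∑ c, u c S * Phat c| ≤ ∑ c, |P c - Phat c| := by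
    intro S hS
    rw [← Finset.sum_sub_distrib]
    refine (Finset.abs_sum_le_sum_abs _ _).trans (Finset.sum_le_sum fun c _ => ?_)
    rw [← mul_sub, abs_mul, abs_of_nonneg (hu c S hS).1]
    exact mul_le_of_le_one_left (abs_nonneg _) (hu c S hS).2
  have h1 := abs_le.mp (key Ystar hYstar)
  have h2 := abs_le.mp (key Yhat hYhat)
  have h3 := hmaxPhat Ystar hYstar
  linarith [h1.2, h2.1]
end

section
/- Let δ and γ be real numbers with 0 < γ < δ and let K ≥ 3 be an integer. Then the credal utility sequence g_{δ,γ}(s) = δ/s − γ/s², s ∈ {1,…,K}, is positive and (1/x)-convex: 1/g_{δ,γ}(s+1) ≤ (1/g_{δ,γ}(s) + 1/g_{δ,γ}(s+2))/2 for all s ∈ {1,…,K−2}. -/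
/-- For `0 < γ < δ`, the credal utility `g s = δ/s − γ/s²` is
positive on `{1,…,K}` and (1/x)-convex. -/
theorem stmt_13 (δ γ : ℝ) (hγ : 0 < γ) (hγδ : γ < δ) (K : ℕ) (hK : 3 ≤ K)
    (g : ℕ → ℝ) (hg : ∀ s : ℕ, g s = δ / (s : ℝ) - γ / (s : ℝ) ^ 2) :
    (∀ s, 1 ≤ s → s ≤ K → 0 < g s) ∧
    (∀ s, 1 ≤ s → s + 2 ≤ K →
      1 / g (s + 1) ≤ (1 / g s + 1 / g (s + 2)) / 2) := by
  have ht : ∀ s : ℕ, 1 ≤ s → 0 < δ * (s : ℝ) - γ := by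
    intro s hs
    have h1 : (1 : ℝ) ≤ s := by exact_mod_cast hs
    nlinarith
  have he : ∀ s : ℕ, 1 ≤ s → g s = (δ * (s : ℝ) - γ) / (s : ℝ) ^ 2 := by
    intro s hs
    have h1 : (s : ℝ) ≠ 0 := by
      have : s ≠ 0 := by omega
      exact_mod_cast this
    rw [hg]
    field_simp
  refine ⟨?_, ?_⟩
  · intro s hs _
    rw [he s hs]
    have h1 : (0 : ℝ) < s := by exact_mod_cast hs
    exact div_pos (ht s hs) (by positivity)
  · intro s hs _
    have t0 := ht s hs
    have t1 := ht (s + 1) (by omega)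
    have t2 := ht (s + 2) (by omega)
    rw [he s hs, he (s + 1) (by omega), he (s + 2) (by omega)]
    simp only [one_div_div]
    push_cast at *
    generalize (s : ℝ) = x at *
    have key : (x ^ 2 / (δ * x - γ) + (x + 2) ^ 2 / (δ * (x + 2) - γ)) / 2
        - (x + 1) ^ 2 / (δ * (x + 1) - γ)
        = γ ^ 2 / ((δ * x - γ) * (δ * (x + 1) - γ) * (δ * (x + 2) - γ)) := by
      have n0 := t0.ne'
      have n3 : x * δ - γ ≠ 0 := by rwa [mul_comm]
      have n1 := t1.ne'
      have n2 := t2.ne'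
      field_simp
      ring
    have : 0 ≤ γ ^ 2 / ((δ * x - γ) * (δ * (x + 1) - γ) * (δ * (x + 2) - γ)) := by
      apply div_nonneg (sq_nonneg _)
      exact (mul_pos (mul_pos t0 t1) t2).le
    linarith
end

section
/- Let 𝒴 be a finite set of K ≥ 1 classes, let p : 𝒴 → ℝ be nonnegative, and let g : {1,…,K} → ℝ be nonnegative, decreasing (g(s) ≥ g(s+1) for all s ∈ {1,…,K−1}) and concave (g(s+1) ≥ (g(s) + g(s+2))/2 for all s ∈ {1,…,K−2}). Define F(∅) = 0 and F(Ŷ) = g(|Ŷ|)·∑_{c∈Ŷ} p(c) for nonempty Ŷ ⊆ 𝒴. Then F is submodular: for all A ⊆ B ⊆ 𝒴 and every x ∈ 𝒴 ∖ B, F(A ∪ {x}) − F(A) ≥ F(B ∪ {x}) − F(B). -/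
/-- For nonnegative weights `p`, and `g` nonnegative, decreasing
and concave on `{1,…,K}`, the set function `F ∅ = 0`,
`F Ŷ = g |Ŷ| · ∑_{c∈Ŷ} p c` (for nonempty `Ŷ`) is submodular. -/
theorem stmt_15 {Y : Type*} [Fintype Y] [DecidableEq Y] (K : ℕ) (hK : 1 ≤ K)
    (hcard : Fintype.card Y = K)
    (p : Y → ℝ) (hp : ∀ c, 0 ≤ p c)
    (g : ℕ → ℝ)
    (hg0 : ∀ s, 1 ≤ s → s ≤ K → 0 ≤ g s)
    (hgdec : ∀ s, 1 ≤ s → s + 1 ≤ K → g (s + 1) ≤ g s)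
    (hgconc : ∀ s, 1 ≤ s → s + 2 ≤ K → (g s + g (s + 2)) / 2 ≤ g (s + 1))
    (F : Finset Y → ℝ) (hF0 : F ∅ = 0)
    (hF : ∀ S : Finset Y, S.Nonempty → F S = g S.card * ∑ c ∈ S, p c) :
    ∀ A B : Finset Y, A ⊆ B → ∀ x : Y, x ∉ B →
      F (insert x B) - F B ≤ F (insert x A) - F A := by
  intro A B hAB x hx
  have hFall : ∀ S : Finset Y, F S = g S.card * ∑ c ∈ S, p c := by
    intro S
    rcases S.eq_empty_or_nonempty with h | h
    · subst h; simp [hF0]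
    · exact hF S h
  have hxA : x ∉ A := fun h => hx (hAB h)
  have hbK : B.card + 1 ≤ K := by
    rw [← hcard, ← Finset.card_insert_of_notMem hx]
    exact Finset.card_le_univ _
  have hab : A.card ≤ B.card := Finset.card_le_card hAB
  have hgm : ∀ n m, 1 ≤ n → n ≤ m → m ≤ K → g m ≤ g n := by
    intro n m hn hnm
    induction m, hnm using Nat.le_induction with
    | base => intro _; exact le_rfl
    | succ m hm ih => intro h; exact (hgdec m (by omega) h).trans (ih (by omega))
  have hdm : ∀ n m, 1 ≤ n → n ≤ m → m + 1 ≤ K → g n - g (n + 1) ≤ g m - g (m + 1) := by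
    intro n m hn hnm
    induction m, hnm using Nat.le_induction with
    | base => intro _; exact le_rfl
    | succ m hm ih =>
      intro h
      have h1 := ih (by omega)
      have h2 := hgconc m (by omega) (by omega)
      have h3 : m + 1 + 1 = m + 2 := rfl
      rw [h3]
      linarith
  have hP : ∑ c ∈ A, p c ≤ ∑ c ∈ B, p c :=
    Finset.sum_le_sum_of_subset_of_nonneg hAB (fun c _ _ => hp c)
  have hPA : 0 ≤ ∑ c ∈ A, p c := Finset.sum_nonneg (fun c _ => hp c)
  have hPB : 0 ≤ ∑ c ∈ B, p c := Finset.sum_nonneg (fun c _ => hp c)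
  have key : (g A.card - g (A.card + 1)) * ∑ c ∈ A, p c
      ≤ (g B.card - g (B.card + 1)) * ∑ c ∈ B, p c := by
    rcases B.eq_empty_or_nonempty with hB | hB
    · subst hB
      rw [Finset.subset_empty.mp hAB]
    · have hb1 : 1 ≤ B.card := hB.card_pos
      have hd : 0 ≤ g B.card - g (B.card + 1) := sub_nonneg.mpr (hgdec _ hb1 hbK)
      rcases A.eq_empty_or_nonempty with hA | hA
      · subst hA
        simpa using mul_nonneg hd hPB
      · exact mul_le_mul (hdm _ _ hA.card_pos hab hbK) hP hPA hd
  have key2 : g (B.card + 1) * p x ≤ g (A.card + 1) * p x :=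
    mul_le_mul_of_nonneg_right (hgm _ _ (by omega) (by omega) hbK) (hp x)
  rw [hFall, hFall, hFall, hFall, Finset.card_insert_of_notMem hx,
    Finset.card_insert_of_notMem hxA, Finset.sum_insert hx, Finset.sum_insert hxA]
  linarith
end

section
/- Let K ≥ 3 be an integer and let α, β be real numbers with 0 ≤ α ≤ (K−1)/K and β ≥ log_{1/(K−1)}(K/2) + 1 (equivalently β ≥ 1 − ln(K/2)/ln(K−1)) and β > 0. Then the generalized reject option utility g_{α,β}(s) = 1 − α·((s−1)/(K−1))^β satisfies g_{α,β}(s) ≥ 1/s for every s ∈ {1,…,K}; i.e., under these parameter bounds g_{α,β} is lower bounded by the precision utility. -/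
/-- For `K ≥ 3`, `0 ≤ α ≤ (K−1)/K`, `β > 0` and
`β ≥ log_{1/(K−1)}(K/2) + 1`, the generalized reject option utility
`g_{α,β}(s) = 1 − α·((s−1)/(K−1))^β` is lower bounded by precision:
`g_{α,β}(s) ≥ 1/s` for every `s ∈ {1,…,K}`. -/
theorem stmt_17 (K : ℕ) (hK : 3 ≤ K) (α β : ℝ)
    (hα0 : 0 ≤ α) (hα : α ≤ ((K : ℝ) - 1) / (K : ℝ))
    (hβ0 : 0 < β)
    (hβ : Real.logb (1 / ((K : ℝ) - 1)) ((K : ℝ) / 2) + 1 ≤ β) :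
    ∀ s : ℕ, 1 ≤ s → s ≤ K →
      1 / (s : ℝ) ≤ 1 - α * (((s : ℝ) - 1) / ((K : ℝ) - 1)) ^ β := by
  intro s hs1 hsK
  rcases Nat.eq_or_lt_of_le hs1 with h1 | h2
  · subst h1
    simp [Real.zero_rpow hβ0.ne']
  have hKr : (3 : ℝ) ≤ K := by exact_mod_cast hK
  have hsr : (2 : ℝ) ≤ s := by exact_mod_cast h2
  have hsKr : (s : ℝ) ≤ K := by exact_mod_cast hsK
  obtain ⟨n, hn⟩ : ∃ n : ℝ, n = (K : ℝ) - 1 := ⟨_, rfl⟩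
  obtain ⟨t, ht⟩ : ∃ t : ℝ, t = (s : ℝ) - 1 := ⟨_, rfl⟩
  have hKn : (K : ℝ) = n + 1 := by linarith
  have hst : (s : ℝ) = t + 1 := by linarith
  rw [hKn] at hα hβ hKr hsKr
  rw [hst] at hsr hsKr
  rw [hKn, hst]
  simp only [add_sub_cancel_right] at *
  have hn2 : 2 ≤ n := by linarith
  have ht1 : 1 ≤ t := by linarith
  have htn : t ≤ n := by linarith
  have hn0 : 0 < n := by linarith
  have ht0 : 0 < t := by linarith
  clear hn ht
  rw [one_div, Real.logb_inv_base] at hβ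
  obtain ⟨c, hc⟩ : ∃ c : ℝ, c = Real.logb n ((n + 1) / 2) := ⟨_, rfl⟩
  rw [← hc] at hβ
  have hnc : n ^ c = (n + 1) / 2 := by
    rw [hc, Real.rpow_logb hn0 (by linarith) (by linarith)]
  obtain ⟨θ, hθ⟩ : ∃ θ : ℝ, θ = Real.logb n t := ⟨_, rfl⟩
  have hnθ : n ^ θ = t := by
    rw [hθ, Real.rpow_logb hn0 (by linarith) ht0]
  have hθ0 : 0 ≤ θ := by rw [hθ]; exact Real.logb_nonneg (by linarith) ht1
  have hθ1 : θ ≤ 1 := by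
    rw [hθ, Real.logb_le_iff_le_rpow (by linarith) ht0]; simpa using htn
  have hm1 : (1 : ℝ) ∈ Set.Ici (0 : ℝ) := by simp
  have hmn : n ∈ Set.Ici (0 : ℝ) := hn0.le
  have hh : (0 : ℝ) ≤ 1 / 2 := by norm_num
  have hh1 : (1 / 2 : ℝ) + 1 / 2 = 1 := by norm_num
  have hconc := (Real.concaveOn_rpow hθ0 hθ1).2 hm1 hmn hh hh hh1
  simp only [smul_eq_mul, Real.one_rpow, hnθ] at hconc
  have e1 : (1 / 2 * 1 + 1 / 2 * n : ℝ) = n ^ c := by rw [hnc]; ring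
  have e2 : (n ^ c) ^ θ = t ^ c := by
    rw [← Real.rpow_mul hn0.le, mul_comm, Real.rpow_mul hn0.le, hnθ]
  rw [e1, e2] at hconc
  have hx : (t / n) ^ β ≤ (t / n) ^ (1 - c) :=
    Real.rpow_le_rpow_of_exponent_ge (by positivity) ((div_le_one hn0).2 htn) (by linarith)
  have hx2 : (t / n) ^ (1 - c) ≤ (t / n) * ((n + 1) / (t + 1)) := by
    rw [Real.rpow_sub (by positivity), Real.rpow_one, Real.div_rpow ht0.le hn0.le, hnc, div_eq_mul_inv]
    refine mul_le_mul_of_nonneg_left ?_ (by positivity)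
    rw [inv_div, div_le_div_iff₀ (by positivity) (by positivity)]
    nlinarith
  have h3 : α * (t / n) ^ β ≤ n / (n + 1) * ((t / n) * ((n + 1) / (t + 1))) :=
    mul_le_mul hα (hx.trans hx2) (by positivity) (by positivity)
  have h4 : n / (n + 1) * ((t / n) * ((n + 1) / (t + 1))) = 1 - 1 / (t + 1) := by
    field_simp
    ring
  linarith
end
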